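/- arXiv:1412.7840 — 2 statements merged into one kernel-verified Lean document; each statement's English description precedes it below -/
import Mathlib

section
/- Suppose the pair (A,B) is controllable (the controllability matrix [B, AB, …, A^{n-1}B] has rank n) and A is nonsingular. Then for every initial state ξ in the reachable set R, the value function of the maximum hands-off control problem equals the L¹ value function: V(ξ) = V₁(ξ). -/
open MeasureTheory Set

noncomputable section

/-- Controllability matrix `[B, AB, ..., A^{n-1}B]`. -/
def ctrbMatrix (n : ℕ) (A : Matrix (Fin n) (Fin n) ℝ) (B : Fin n → ℝ) :
    Matrix (Fin n) (Fin n) ℝ :=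
  Matrix.of fun i j => (A ^ (j : ℕ)).mulVec B i

/-- `∫₀ᵀ e^{-As} B u(s) ds`. -/
def stateInt (n : ℕ) (T : ℝ) (A : Matrix (Fin n) (Fin n) ℝ) (B : Fin n → ℝ)
    (u : ℝ → ℝ) : Fin n → ℝ :=
  ∫ s in Icc (0:ℝ) T, u s • (NormedSpace.exp ((-s) • A)).mulVec B

/-- The magnitude constraint `‖u‖_∞ ≤ 1` on `[0,T]`. -/
def MagBdd (T : ℝ) (u : ℝ → ℝ) : Prop := ∀ t ∈ Icc (0:ℝ) T, |u t| ≤ 1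

/-- The `L¹` norm of `u` on `[0,T]`. -/
def L1Norm (T : ℝ) (u : ℝ → ℝ) : ℝ := ∫ t in Icc (0:ℝ) T, |u t|

/-- The `L⁰` norm of `u`: Lebesgue measure of `{t ∈ [0,T] : u t ≠ 0}`. -/
def L0Norm (T : ℝ) (u : ℝ → ℝ) : ℝ := (volume {t ∈ Icc (0:ℝ) T | u t ≠ 0}).toReal

/-- Admissible controls steering `ξ` to `0` at time `T`:
`∫₀ᵀ e^{-As} B u(s) ds = -ξ` and `‖u‖_∞ ≤ 1`. -/
def Admissible (n : ℕ) (T : ℝ) (A : Matrix (Fin n) (Fin n) ℝ) (B : Fin n → ℝ)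
    (ξ : Fin n → ℝ) (u : ℝ → ℝ) : Prop :=
  Measurable u ∧ MagBdd T u ∧ stateInt n T A B u = -ξ

/-- Value function of the maximum hands-off (`L⁰`-optimal) control problem. -/
def V0 (n : ℕ) (T : ℝ) (A : Matrix (Fin n) (Fin n) ℝ) (B : Fin n → ℝ)
    (ξ : Fin n → ℝ) : ℝ :=
  sInf {c | ∃ u, Admissible n T A B ξ u ∧ c = L0Norm T u}

/-- Value function of the `L¹`-optimal control problem. -/
def V1 (n : ℕ) (T : ℝ) (A : Matrix (Fin n) (Fin n) ℝ) (B : Fin n → ℝ)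
    (ξ : Fin n → ℝ) : ℝ :=
  sInf {c | ∃ u, Admissible n T A B ξ u ∧ c = L1Norm T u}

/-- The reachable set `R`. -/
def Reach (n : ℕ) (T : ℝ) (A : Matrix (Fin n) (Fin n) ℝ) (B : Fin n → ℝ) :
    Set (Fin n → ℝ) :=
  {x | ∃ u, Measurable u ∧ MagBdd T u ∧ x = stateInt n T A B u}

/-- The set `R_α`. -/
def ReachL1 (n : ℕ) (T : ℝ) (A : Matrix (Fin n) (Fin n) ℝ) (B : Fin n → ℝ)
    (α : ℝ) : Set (Fin n → ℝ) :=
  {x | ∃ u, Measurable u ∧ MagBdd T u ∧ L1Norm T u ≤ α ∧ x = stateInt n T A B u}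


lemma poly_exists {ι : Type*} [Fintype ι] (T : ℝ) (q : ℝ → ℝ) (g : ι → ℝ → ℝ)
    (hq : ∀ i, Integrable (fun s => q s * g i s) (volume.restrict (Icc (0:ℝ) T))) :
    ∃ p : Polynomial ℝ, p ≠ 0 ∧ ∀ i, ∫ s in Icc (0:ℝ) T, p.eval s * (q s * g i s) = 0 := by
  have hint : ∀ (p : Polynomial ℝ) i, Integrable (fun s => p.eval s * (q s * g i s))
      (volume.restrict (Icc (0:ℝ) T)) := by
    intro p i
    obtain ⟨M, hM⟩ := isCompact_Icc.exists_bound_of_continuousOn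
      (s := Icc (0:ℝ) T) (f := fun s => p.eval s) (by fun_prop)
    refine (hq i).bdd_mul (c := M) (by fun_prop) ?_
    filter_upwards [ae_restrict_mem measurableSet_Icc] with s hs using hM s hs
  let L : Polynomial ℝ →ₗ[ℝ] (ι → ℝ) :=
    { toFun := fun p i => ∫ s in Icc (0:ℝ) T, p.eval s * (q s * g i s)
      map_add' := by
        intro p r
        ext i
        simp only [Polynomial.eval_add, add_mul, Pi.add_apply]
        exact integral_add (hint p i) (hint r i)
      map_smul' := by
        intro c p
        ext i
        simp only [Polynomial.eval_smul, smul_eq_mul, mul_assoc, Pi.smul_apply, RingHom.id_apply]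
        exact integral_const_mul _ _ }
  have hL : ¬ Function.Injective L := fun h =>
    Polynomial.not_finite (R := ℝ) (Module.Finite.of_injective L h)
  rw [← LinearMap.ker_eq_bot, Submodule.eq_bot_iff] at hL
  push Not at hL
  obtain ⟨p, hp, hp0⟩ := hL
  exact ⟨p, hp0, fun i => congrFun (LinearMap.mem_ker.1 hp) i⟩

/-- Feasible weights. -/
def FeasW {ι : Type*} (μ : Measure ℝ) (g : ι → ℝ → ℝ) (c : ι → ℝ)
    (w : Lp ℝ 2 μ) : Prop :=
  (∀ᵐ s ∂μ, 0 ≤ w s ∧ w s ≤ 1) ∧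
    ∀ i, ∫ s, w s * g i s ∂μ = c i

lemma feas_extreme {ι : Type*} (μ : Measure ℝ) [IsFiniteMeasure μ] (g : ι → ℝ → ℝ) (c : ι → ℝ)
    (hg : ∀ i, MemLp (g i) 2 μ)
    (w₀ : Lp ℝ 2 μ) (hw₀ : FeasW μ g c w₀) :
    ∃ w, FeasW μ g c w ∧ ∀ h, FeasW μ g c (w + h) → FeasW μ g c (w - h) → h = 0 := by
  let D := InnerProductSpace.toDual ℝ (Lp ℝ 2 μ)
  let K : Set (WeakDual ℝ (Lp ℝ 2 μ)) :=
    {φ | FeasW μ g c (D.symm (WeakDual.toStrongDual φ))}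
  have hinner : ∀ (φ : WeakDual ℝ (Lp ℝ 2 μ)) (f : Lp ℝ 2 μ),
      φ f = inner ℝ f (D.symm (WeakDual.toStrongDual φ)) := by
    intro φ f
    rw [real_inner_comm, InnerProductSpace.toDual_symm_apply]
    rfl
  have hint : ∀ w : Lp ℝ 2 μ, Integrable w μ := fun w =>
    (Lp.memLp w).integrable (by norm_num)
  have hbox : ∀ w : Lp ℝ 2 μ, (∀ᵐ s ∂μ, 0 ≤ w s ∧ w s ≤ 1) ↔
      ∀ s : {s : Set ℝ // MeasurableSet s},
        0 ≤ inner ℝ (indicatorConstLp 2 s.2 (measure_ne_top μ s.1) (1:ℝ)) w ∧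
        inner ℝ (indicatorConstLp 2 s.2 (measure_ne_top μ s.1) (1:ℝ)) w ≤ μ.real s.1 := by
    intro w
    constructor
    · rintro h ⟨s, hs⟩
      rw [L2.inner_indicatorConstLp_one]
      have h' := ae_restrict_of_ae (s := s) h
      constructor
      · exact integral_nonneg_of_ae (h'.mono fun x hx => hx.1)
      · have : ∫ x in s, w x ∂μ ≤ ∫ x in s, (1:ℝ) ∂μ :=
          integral_mono_ae (hint w).integrableOn (integrable_const _) (h'.mono fun x hx => hx.2)
        simpa using this
    · intro h
      have h1 : 0 ≤ᵐ[μ] w := ae_nonneg_of_forall_setIntegral_nonneg (hint w) (by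
        intro s hs _
        have := (h ⟨s, hs⟩).1
        rwa [L2.inner_indicatorConstLp_one] at this)
      have h2 : w ≤ᵐ[μ] fun _ => (1:ℝ) :=
        ae_le_of_forall_setIntegral_le (hint w) (integrable_const _) (by
        intro s hs _
        have := (h ⟨s, hs⟩).2
        rw [L2.inner_indicatorConstLp_one] at this
        simpa using this)
      filter_upwards [h1, h2] with x a b using ⟨a, b⟩
  have hcon : ∀ (w : Lp ℝ 2 μ) i, ∫ s, w s * g i s ∂μ = inner ℝ ((hg i).toLp (g i)) w := by
    intro w i
    rw [L2.inner_def]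
    apply integral_congr_ae
    filter_upwards [(hg i).coeFn_toLp] with s hs
    rw [hs]; simp
  have hK : K = (⋂ s : {s : Set ℝ // MeasurableSet s},
      {φ : WeakDual ℝ (Lp ℝ 2 μ) |
        0 ≤ φ (indicatorConstLp 2 s.2 (measure_ne_top μ s.1) (1:ℝ)) ∧
        φ (indicatorConstLp 2 s.2 (measure_ne_top μ s.1) (1:ℝ)) ≤ μ.real s.1}) ∩
      ⋂ i, {φ : WeakDual ℝ (Lp ℝ 2 μ) | φ ((hg i).toLp (g i)) = c i} := by
    ext φ
    simp only [K, FeasW, mem_ofPred_eq, mem_inter_iff, mem_iInter]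
    rw [hbox]
    simp only [hinner, hcon]
  have hclosed : IsClosed K := by
    rw [hK]
    refine IsClosed.inter (isClosed_iInter fun s => ?_) (isClosed_iInter fun i => ?_)
    · exact (isClosed_le continuous_const (WeakDual.eval_continuous _)).inter
        (isClosed_le (WeakDual.eval_continuous _) continuous_const)
    · exact isClosed_eq (WeakDual.eval_continuous _) continuous_const
  have hcomp : IsCompact K := by
    refine (WeakDual.isCompact_closedBall (0 : StrongDual ℝ (Lp ℝ 2 μ))
      ‖(Lp.const 2 μ (1:ℝ))‖).of_isClosed_subset hclosed ?_
    intro φ hφ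
    simp only [mem_preimage, mem_closedBall_zero_iff]
    rw [← D.symm.norm_map]
    apply Lp.norm_le_norm_of_ae_le
    filter_upwards [hφ.1, Lp.coeFn_const (p := 2) (μ := μ) (1:ℝ)] with s hs h1
    rw [h1, Real.norm_eq_abs, abs_of_nonneg hs.1]
    simpa using hs.2
  have hne : K.Nonempty := ⟨StrongDual.toWeakDual (D w₀), by
    change FeasW μ g c (D.symm (D w₀))
    rwa [D.symm_apply_apply]⟩
  have : LocallyConvexSpace ℝ (WeakDual ℝ (Lp ℝ 2 μ)) :=
    inferInstanceAs (LocallyConvexSpace ℝ (WeakBilin (topDualPairing ℝ (Lp ℝ 2 μ))))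
  obtain ⟨φ, hφ⟩ := hcomp.extremePoints_nonempty hne
  rw [mem_extremePoints] at hφ
  refine ⟨D.symm (WeakDual.toStrongDual φ), hφ.1, fun h h1 h2 => ?_⟩
  set w := D.symm (WeakDual.toStrongDual φ) with hw
  have hwφ : D w = WeakDual.toStrongDual φ := by rw [hw, D.apply_symm_apply]
  have m1 : StrongDual.toWeakDual (D (w + h)) ∈ K := by
    change FeasW μ g c (D.symm (D (w + h)))
    rwa [D.symm_apply_apply]
  have m2 : StrongDual.toWeakDual (D (w - h)) ∈ K := by
    change FeasW μ g c (D.symm (D (w - h)))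
    rwa [D.symm_apply_apply]
  have := (hφ.2 _ m1 _ m2 ⟨1/2, 1/2, by norm_num, by norm_num, by norm_num, by
    rw [map_add, map_sub, hwφ, map_add, map_sub]
    simp only [smul_add, smul_sub]
    have : StrongDual.toWeakDual (WeakDual.toStrongDual φ) = φ := rfl
    rw [this]
    module⟩).1
  have e : D (w + h) = D w := by
    rw [hwφ]; exact congrArg WeakDual.toStrongDual this
  simpa using D.injective e

lemma lyapunov {ι : Type*} [Fintype ι] (T : ℝ) (g : ι → ℝ → ℝ)
    (hgm : ∀ i, AEStronglyMeasurable (g i) (volume.restrict (Icc (0:ℝ) T)))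
    (C : ℝ) (hgb : ∀ i, ∀ s ∈ Icc (0:ℝ) T, |g i s| ≤ C)
    (v : ℝ → ℝ) (hv : Measurable v) (hv01 : ∀ s ∈ Icc (0:ℝ) T, 0 ≤ v s ∧ v s ≤ 1) :
    ∃ E : Set ℝ, MeasurableSet E ∧
      ∀ i, ∫ s in Icc (0:ℝ) T, E.indicator 1 s * g i s = ∫ s in Icc (0:ℝ) T, v s * g i s := by
  set μ := volume.restrict (Icc (0:ℝ) T) with hμ
  have hmem : ∀ᵐ s ∂μ, s ∈ Icc (0:ℝ) T := ae_restrict_mem measurableSet_Icc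
  have hgL : ∀ i, MemLp (g i) 2 μ := fun i =>
    MemLp.of_bound (hgm i) C (hmem.mono fun s hs => hgb i s hs)
  have hvL : MemLp v 2 μ := MemLp.of_bound hv.aestronglyMeasurable 1 (hmem.mono fun s hs => by
    rw [Real.norm_eq_abs, abs_of_nonneg (hv01 s hs).1]; exact (hv01 s hs).2)
  obtain ⟨w, hw, hext⟩ := feas_extreme μ g (fun i => ∫ s, v s * g i s ∂μ) hgL
    (hvL.toLp v) (by
      constructor
      · filter_upwards [hvL.coeFn_toLp, hmem] with s h1 h2
        rw [h1]; exact hv01 s h2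
      · intro i
        apply integral_congr_ae
        filter_upwards [hvL.coeFn_toLp] with s h1
        rw [h1])
  have hwm : StronglyMeasurable w := Lp.stronglyMeasurable w
  have hqb : ∀ᵐ s ∂μ, ‖w s * (1 - w s)‖ ≤ 1 := hw.1.mono fun s hs => by
    rw [Real.norm_eq_abs, abs_le]; constructor <;> nlinarith [hs.1, hs.2]
  have hqm : AEStronglyMeasurable (fun s => w s * (1 - w s)) μ :=
    (hwm.mul (stronglyMeasurable_const.sub hwm)).aestronglyMeasurable
  have hgi : ∀ i, Integrable (g i) μ := fun i => (hgL i).integrable (by norm_num)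
  have hqi : ∀ i, Integrable (fun s => (w s * (1 - w s)) * g i s) μ := fun i =>
    (hgi i).bdd_mul hqm hqb
  obtain ⟨p, hp0, hp⟩ := poly_exists T (fun s => w s * (1 - w s)) g hqi
  obtain ⟨M, hM⟩ := isCompact_Icc.exists_bound_of_continuousOn
      (s := Icc (0:ℝ) T) (f := fun s => p.eval s) (by fun_prop)
  set M' := |M| + 1 with hM'
  have hM'0 : 0 < M' := by positivity
  have hpM : ∀ s ∈ Icc (0:ℝ) T, |p.eval s / M'| ≤ 1 := by
    intro s hs
    rw [abs_div, abs_of_pos hM'0, div_le_one hM'0]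
    have := hM s hs
    rw [Real.norm_eq_abs] at this
    linarith [le_abs_self M]
  have hhm : AEStronglyMeasurable (fun s => p.eval s / M' * (w s * (1 - w s))) μ := by
    refine AEStronglyMeasurable.mul ?_ hqm
    exact (by fun_prop : Continuous fun s => p.eval s / M').aestronglyMeasurable
  have hhL : MemLp (fun s => p.eval s / M' * (w s * (1 - w s))) 2 μ :=
    MemLp.of_bound hhm 1 (by
      filter_upwards [hqb, hmem] with s h1 h2
      rw [norm_mul]
      exact mul_le_one₀ (hpM s h2) (norm_nonneg _) h1)
  have hwi : ∀ i, Integrable (fun s => w s * g i s) μ := fun i =>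
    (hgi i).bdd_mul (c := 1) hwm.aestronglyMeasurable (hw.1.mono fun s hs => by
      rw [Real.norm_eq_abs, abs_of_nonneg hs.1]; exact hs.2)
  have hhi : ∀ i, Integrable (fun s => p.eval s / M' * (w s * (1 - w s)) * g i s) μ := fun i =>
    (hgi i).bdd_mul (c := 1) hhm (by
      filter_upwards [hqb, hmem] with s h1 h2
      rw [norm_mul]
      exact mul_le_one₀ (hpM s h2) (norm_nonneg _) h1)
  have hh0 : ∀ i, ∫ s, p.eval s / M' * (w s * (1 - w s)) * g i s ∂μ = 0 := by
    intro i
    have : ∀ s, p.eval s / M' * (w s * (1 - w s)) * g i s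
      = M'⁻¹ * (p.eval s * ((w s * (1 - w s)) * g i s)) := fun s => by ring
    simp_rw [this]
    rw [integral_const_mul, hp i, mul_zero]
  have hz := hext (hhL.toLp _) (by
      constructor
      · filter_upwards [Lp.coeFn_add w (hhL.toLp _), hhL.coeFn_toLp, hw.1, hmem] with s h1 h2 h3 h4
        rw [h1, Pi.add_apply, h2]
        have := abs_le.1 (hpM s h4)
        have : 0 ≤ w s * (1 - w s) := mul_nonneg h3.1 (by linarith [h3.2])
        constructor <;> nlinarith [h3.1, h3.2]
      · intro i
        refine Eq.trans ?_ ((integral_add (hwi i) (hhi i)).trans (by rw [hh0 i, add_zero, hw.2 i]))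
        apply integral_congr_ae
        filter_upwards [Lp.coeFn_add w (hhL.toLp _), hhL.coeFn_toLp] with s h1 h2
        rw [h1, Pi.add_apply, h2]; ring) (by
      constructor
      · filter_upwards [Lp.coeFn_sub w (hhL.toLp _), hhL.coeFn_toLp, hw.1, hmem] with s h1 h2 h3 h4
        rw [h1, Pi.sub_apply, h2]
        have := abs_le.1 (hpM s h4)
        have : 0 ≤ w s * (1 - w s) := mul_nonneg h3.1 (by linarith [h3.2])
        constructor <;> nlinarith [h3.1, h3.2]
      · intro i
        refine Eq.trans ?_ ((integral_sub (hwi i) (hhi i)).trans (by rw [hh0 i, sub_zero, hw.2 i]))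
        apply integral_congr_ae
        filter_upwards [Lp.coeFn_sub w (hhL.toLp _), hhL.coeFn_toLp] with s h1 h2
        rw [h1, Pi.sub_apply, h2]; ring)
  have hpne : ∀ᵐ s ∂μ, p.eval s ≠ 0 := by
    apply ae_restrict_of_ae
    rw [ae_iff]
    refine measure_mono_null ?_ ((p.rootSet_finite ℝ).measure_zero volume)
    intro s hs
    simp only [ne_eq, not_not, mem_ofPred_eq] at hs
    rw [Polynomial.mem_rootSet]
    exact ⟨hp0, by simpa using hs⟩
  have hw01 : ∀ᵐ s ∂μ, w s = 0 ∨ w s = 1 := by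
    have h0 : (hhL.toLp _ : ℝ → ℝ) =ᵐ[μ] 0 := by rw [hz]; exact Lp.coeFn_zero _ _ _
    filter_upwards [hpne, h0, hhL.coeFn_toLp] with s h1 h2 h3
    rw [h3] at h2
    simp only [Pi.zero_apply, mul_eq_zero, div_eq_zero_iff, h1, hM'0.ne', false_or] at h2
    rcases h2 with h | h
    · exact Or.inl h
    · exact Or.inr (by linarith)
  refine ⟨{s | w s = 1}, hwm.measurable (measurableSet_singleton 1), fun i => ?_⟩
  refine Eq.trans ?_ (hw.2 i)
  apply integral_congr_ae
  filter_upwards [hw01] with s hs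
  rcases hs with h | h <;> simp [indicator, h]

open scoped Matrix.Norms.Operator in
lemma exp_col_continuous (n : ℕ) (A : Matrix (Fin n) (Fin n) ℝ) (B : Fin n → ℝ) (i : Fin n) :
    Continuous fun s : ℝ => (NormedSpace.exp ((-s) • A)).mulVec B i := by
  have h : Continuous fun s : ℝ => NormedSpace.exp ((-s) • A) :=
    NormedSpace.exp_continuous.comp (by fun_prop)
  exact (continuous_apply i).comp (h.matrix_mulVec continuous_const)

lemma stateInt_apply (n : ℕ) (T : ℝ) (A : Matrix (Fin n) (Fin n) ℝ) (B : Fin n → ℝ)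
    (u : ℝ → ℝ) (hu : Measurable u) (hb : MagBdd T u) (i : Fin n) :
    stateInt n T A B u i
      = ∫ s in Icc (0:ℝ) T, u s * (NormedSpace.exp ((-s) • A)).mulVec B i := by
  unfold stateInt
  rw [eval_integral]
  · rfl
  · intro j
    have hi : Integrable (fun s : ℝ => (NormedSpace.exp ((-s) • A)).mulVec B j)
        (volume.restrict (Icc (0:ℝ) T)) :=
      (exp_col_continuous n A B j).continuousOn.integrableOn_Icc
    exact hi.bdd_mul (c := 1) hu.aestronglyMeasurable
      ((ae_restrict_mem measurableSet_Icc).mono fun s hs => hb s hs)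

lemma exists_bang (n : ℕ) (T : ℝ) (A : Matrix (Fin n) (Fin n) ℝ) (B : Fin n → ℝ)
    (ξ : Fin n → ℝ) (u : ℝ → ℝ) (hu : Admissible n T A B ξ u) :
    ∃ u', Admissible n T A B ξ u' ∧ L0Norm T u' ≤ L1Norm T u := by
  obtain ⟨hm, hb, hs⟩ := hu
  let σ : ℝ → ℝ := fun s => if 0 ≤ u s then 1 else -1
  have hσm : Measurable σ :=
    Measurable.ite (measurableSet_le measurable_const hm) measurable_const measurable_const
  have hσ1 : ∀ s, |σ s| = 1 := fun s => by simp only [σ]; split_ifs <;> simp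
  have hσu : ∀ s, |u s| * σ s = u s := fun s => by
    simp only [σ]; split_ifs with h
    · rw [abs_of_nonneg h, mul_one]
    · rw [abs_of_neg (not_le.1 h)]; ring
  let g : Option (Fin n) → ℝ → ℝ := fun o s => match o with
    | none => 1
    | some i => σ s * (NormedSpace.exp ((-s) • A)).mulVec B i
  have hbd : ∀ o, ∃ C : ℝ, ∀ s ∈ Icc (0:ℝ) T, |g o s| ≤ C := by
    rintro (_ | i)
    · exact ⟨1, fun s _ => by simp [g]⟩
    · obtain ⟨M, hM⟩ := isCompact_Icc.exists_bound_of_continuousOn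
        (s := Icc (0:ℝ) T) (exp_col_continuous n A B i).continuousOn
      refine ⟨M, fun s h => ?_⟩
      simp only [g, abs_mul, hσ1, one_mul]
      exact hM s h
  choose C hC using hbd
  obtain ⟨E, hE, hEg⟩ := lyapunov T g (by
      rintro (_ | i)
      · exact aestronglyMeasurable_const
      · exact (hσm.mul (exp_col_continuous n A B i).measurable).aestronglyMeasurable)
    (∑ o, |C o|) (fun o s h => (hC o s h).trans ((le_abs_self _).trans
      (Finset.single_le_sum (f := fun o => |C o|) (fun _ _ => abs_nonneg _) (Finset.mem_univ o))))
    (fun s => |u s|) hm.abs (fun s h => ⟨abs_nonneg _, hb s h⟩)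
  have hm' : Measurable (E.indicator σ) := hσm.indicator hE
  have hb' : MagBdd T (E.indicator σ) := fun s _ => by
    by_cases h : s ∈ E <;> simp [h, hσ1]
  refine ⟨E.indicator σ, ⟨hm', hb', ?_⟩, ?_⟩
  · rw [← hs]
    ext i
    rw [stateInt_apply n T A B _ hm' hb', stateInt_apply n T A B _ hm hb]
    have := hEg (some i)
    simp only [g, ← mul_assoc, hσu] at this
    rw [← this]
    congr 1
    ext s
    by_cases h : s ∈ E <;> simp [h]
  · have := hEg none
    simp only [g, mul_one] at this
    rw [L1Norm, ← this, integral_indicator_one hE]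
    rw [measureReal_restrict_apply hE, L0Norm, Measure.real]
    apply ENNReal.toReal_mono
    · exact ((measure_mono inter_subset_right).trans_lt measure_Icc_lt_top).ne
    · apply measure_mono
      rintro s ⟨h1, h2⟩
      exact ⟨by_contra fun h => h2 (indicator_of_notMem h _), h1⟩

lemma L1_le_L0 (T : ℝ) (u : ℝ → ℝ) (hm : Measurable u) (hb : MagBdd T u) :
    L1Norm T u ≤ L0Norm T u := by
  have hS : MeasurableSet {t | u t ≠ 0} := (hm (measurableSet_singleton 0)).compl
  have h : L0Norm T u = ∫ s in Icc (0:ℝ) T, {t | u t ≠ 0}.indicator 1 s := by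
    rw [integral_indicator_one hS, measureReal_restrict_apply hS, inter_comm]
    rfl
  rw [h, L1Norm]
  have hmem := ae_restrict_mem (μ := (volume : Measure ℝ)) (measurableSet_Icc (a := (0:ℝ)) (b := T))
  refine integral_mono_ae ?_ ?_ ?_
  · exact Integrable.of_bound hm.abs.aestronglyMeasurable 1 (hmem.mono fun s h => by
      rw [Real.norm_eq_abs, abs_abs]; exact hb s h)
  · exact (integrable_const (1:ℝ)).indicator hS
  · filter_upwards [hmem] with s h
    by_cases h0 : u s = 0
    · simp [h0]
    · simpa [indicator, h0] using hb s h

theorem value_function_L0_eq_L1 (n : ℕ) (T : ℝ) (hT : 0 < T)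
    (A : Matrix (Fin n) (Fin n) ℝ) (B : Fin n → ℝ)
    (hctrb : (ctrbMatrix n A B).rank = n) (hA : A.det ≠ 0) :
    ∀ ξ ∈ Reach n T A B, V0 n T A B ξ = V1 n T A B ξ := by
  rintro ξ ⟨u₀, hm, hb, rfl⟩
  have hadm : Admissible n T A B (stateInt n T A B u₀) (-u₀) := by
    refine ⟨hm.neg, fun t ht => by simpa using hb t ht, ?_⟩
    simp only [stateInt, Pi.neg_apply, neg_smul]
    exact integral_neg _
  unfold V0 V1
  apply le_antisymm
  · refine le_csInf ⟨_, _, hadm, rfl⟩ ?_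
    rintro _ ⟨u, hu, rfl⟩
    obtain ⟨u', hu', hle⟩ := exists_bang n T A B _ u hu
    refine le_trans (csInf_le ⟨0, ?_⟩ ⟨u', hu', rfl⟩) hle
    rintro _ ⟨v, _, rfl⟩
    exact ENNReal.toReal_nonneg
  · refine le_csInf ⟨_, _, hadm, rfl⟩ ?_
    rintro _ ⟨u, hu, rfl⟩
    refine le_trans (csInf_le ⟨0, ?_⟩ ⟨u, hu, rfl⟩) (L1_le_L0 T u hu.1 hu.2.1)
    rintro _ ⟨v, _, rfl⟩
    exact integral_nonneg fun _ => abs_nonneg _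
end
end

section
/- Suppose the pair (A,B) is controllable (the controllability matrix [B, AB, …, A^{n-1}B] has rank n) and A is nonsingular. Then the extended value function V̄ defined on ℝⁿ by V̄(ξ) = V(ξ) for ξ ∈ R and V̄(ξ) = T for ξ ∉ R is upper semi-continuous on ℝⁿ, i.e., for every α ∈ ℝ the set {ξ ∈ ℝⁿ : V̄(ξ) < α} is open. -/
open MeasureTheory Set

noncomputable section

open Classical in
/-- The extended value function `V̄`. -/
def Vbar (n : ℕ) (T : ℝ) (A : Matrix (Fin n) (Fin n) ℝ) (B : Fin n → ℝ)
    (ξ : Fin n → ℝ) : ℝ :=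
  if ξ ∈ Reach n T A B then V0 n T A B ξ else T

section aux
attribute [local instance] Matrix.linftyOpNormedRing Matrix.linftyOpNormedAlgebra
  Matrix.linftyOpNormedAddCommGroup

/-- The linear functional `M ↦ p · (M B)`. -/
def phiFun (n : ℕ) (p B : Fin n → ℝ) : Matrix (Fin n) (Fin n) ℝ →L[ℝ] ℝ :=
  LinearMap.toContinuousLinearMap
    { toFun := fun M => p ⬝ᵥ M.mulVec B
      map_add' := fun M N => by simp [Matrix.add_mulVec, dotProduct_add]
      map_smul' := fun c M => by simp [Matrix.smul_mulVec, dotProduct_smul] }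

lemma phiFun_apply (n : ℕ) (p B : Fin n → ℝ) (M : Matrix (Fin n) (Fin n) ℝ) :
    phiFun n p B M = p ⬝ᵥ M.mulVec B := rfl

lemma exp_cont (n : ℕ) (A : Matrix (Fin n) (Fin n) ℝ) :
    Continuous fun s : ℝ => NormedSpace.exp ((-s) • A) := by
  have h : Continuous (NormedSpace.exp : Matrix (Fin n) (Fin n) ℝ → _) :=
    NormedSpace.exp_continuous
  exact h.comp (by fun_prop)

lemma phi_analytic (n : ℕ) (A : Matrix (Fin n) (Fin n) ℝ) (p B : Fin n → ℝ) :
    AnalyticOnNhd ℝ (fun s : ℝ => p ⬝ᵥ (NormedSpace.exp ((-s) • A)).mulVec B) univ := by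
  intro s _
  have h1 : AnalyticAt ℝ (fun s : ℝ => (-s) • A) s := by fun_prop
  have h2 : AnalyticAt ℝ (fun s : ℝ => NormedSpace.exp ((-s) • A)) s :=
    AnalyticAt.comp (g := NormedSpace.exp) (NormedSpace.exp_analytic (𝕂 := ℝ) ((-s) • A)) h1
  exact (phiFun n p B).analyticAt _ |>.comp h2

lemma phi_deriv (n : ℕ) (A : Matrix (Fin n) (Fin n) ℝ) (p C : Fin n → ℝ)
    (h : ∀ s : ℝ, p ⬝ᵥ (NormedSpace.exp ((-s) • A)).mulVec C = 0) :
    ∀ s : ℝ, p ⬝ᵥ (NormedSpace.exp ((-s) • A)).mulVec (A.mulVec C) = 0 := by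
  intro s
  have h1 : HasDerivAt (fun s : ℝ => NormedSpace.exp (s • A)) (NormedSpace.exp ((-s) • A) * A) (-s) :=
    hasDerivAt_exp_smul_const A (-s)
  have h2 := (phiFun n p C).hasFDerivAt.comp_hasDerivAt (-s) h1
  have h3 : (⇑(phiFun n p C) ∘ fun s : ℝ => NormedSpace.exp (s • A)) = fun _ => 0 := by
    funext t
    have := h (-t)
    rw [neg_neg] at this
    exact this
  rw [h3] at h2
  have h4 := h2.unique (hasDerivAt_const (-s) (0:ℝ))
  change p ⬝ᵥ (NormedSpace.exp ((-s) • A) * A).mulVec C = 0 at h4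
  rw [← Matrix.mulVec_mulVec] at h4
  exact h4

lemma g_cont (n : ℕ) (A : Matrix (Fin n) (Fin n) ℝ) (B : Fin n → ℝ) :
    Continuous fun s : ℝ => (NormedSpace.exp ((-s) • A)).mulVec B :=
  (exp_cont n A).matrix_mulVec continuous_const

end aux

lemma p_zero_of_forall (n : ℕ) (A : Matrix (Fin n) (Fin n) ℝ) (B p : Fin n → ℝ)
    (hctrb : (ctrbMatrix n A B).rank = n)
    (h : ∀ s : ℝ, p ⬝ᵥ (NormedSpace.exp ((-s) • A)).mulVec B = 0) : p = 0 := by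
  have hk : ∀ k : ℕ, ∀ s : ℝ,
      p ⬝ᵥ (NormedSpace.exp ((-s) • A)).mulVec ((A ^ k).mulVec B) = 0 := by
    intro k
    induction k with
    | zero => simpa using h
    | succ k ih =>
      have := phi_deriv n A p _ ih
      intro s
      rw [pow_succ', ← Matrix.mulVec_mulVec]
      exact this s
  have hv : Matrix.vecMul p (ctrbMatrix n A B) = 0 := by
    funext j
    have := hk j 0
    simp only [neg_zero, zero_smul, NormedSpace.exp_zero, Matrix.one_mulVec] at this
    exact this
  have hu : IsUnit (ctrbMatrix n A B) := by
    rw [← Matrix.mulVec_surjective_iff_isUnit]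
    have h1 : LinearMap.range (ctrbMatrix n A B).mulVecLin = ⊤ := by
      apply Submodule.eq_top_of_finrank_eq
      rw [← Matrix.rank, hctrb]
      simp
    exact LinearMap.range_eq_top.1 h1
  have hinj := Matrix.vecMul_injective_of_isUnit hu
  exact hinj (by simpa using hv)

lemma exists_acc (S : Set ℝ) (hS : volume S ≠ 0) :
    ∃ x ∈ S, ∀ t ∈ nhdsWithin x S, 0 < volume t :=
  exists_mem_forall_mem_nhdsWithin_pos_measure hS

lemma p_zero_of_pos (n : ℕ) (A : Matrix (Fin n) (Fin n) ℝ) (B p : Fin n → ℝ)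
    (hctrb : (ctrbMatrix n A B).rank = n) (S : Set ℝ) (hS : volume S ≠ 0)
    (h : ∀ s ∈ S, p ⬝ᵥ (NormedSpace.exp ((-s) • A)).mulVec B = 0) : p = 0 := by
  apply p_zero_of_forall n A B p hctrb
  obtain ⟨x, hx, hacc⟩ := exists_acc S hS
  have hf : ∃ᶠ s in nhdsWithin x {x}ᶜ,
      p ⬝ᵥ (NormedSpace.exp ((-s) • A)).mulVec B = 0 := by
    intro hev
    rw [eventually_nhdsWithin_iff] at hev
    have h1 : ∀ᶠ s in nhdsWithin x S, s = x := by
      filter_upwards [mem_nhdsWithin_of_mem_nhds hev, self_mem_nhdsWithin] with s hs hsS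
      by_contra hne
      exact hs hne (h s hsS)
    have := hacc _ h1
    simp at this
  have := (phi_analytic n A p B).eqOn_zero_of_preconnected_of_frequently_eq_zero
    isPreconnected_univ (mem_univ x) hf
  intro s
  exact this (mem_univ s)

lemma gdot_cont (n : ℕ) (A : Matrix (Fin n) (Fin n) ℝ) (B : Fin n → ℝ) :
    Continuous fun q : (Fin n → ℝ) × ℝ =>
      q.1 ⬝ᵥ (NormedSpace.exp ((-q.2) • A)).mulVec B :=
  continuous_fst.dotProduct ((g_cont n A B).comp continuous_snd)

lemma int_aux (n : ℕ) (T : ℝ) (A : Matrix (Fin n) (Fin n) ℝ) (B p : Fin n → ℝ)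
    (F : Set ℝ) (hF : F ⊆ Icc 0 T) :
    IntegrableOn (fun s : ℝ => (p ⬝ᵥ (NormedSpace.exp ((-s) • A)).mulVec B) •
      (NormedSpace.exp ((-s) • A)).mulVec B) F := by
  refine IntegrableOn.mono_set ?_ hF
  apply Continuous.integrableOn_Icc
  exact (continuous_const.dotProduct (g_cont n A B)).smul (g_cont n A B)

/-- Gramian on `F`. -/
def gram (n : ℕ) (T : ℝ) (A : Matrix (Fin n) (Fin n) ℝ) (B : Fin n → ℝ)
    (F : Set ℝ) (hF : F ⊆ Icc 0 T) : (Fin n → ℝ) →ₗ[ℝ] (Fin n → ℝ) where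
  toFun p := ∫ s in F, (p ⬝ᵥ (NormedSpace.exp ((-s) • A)).mulVec B) •
      (NormedSpace.exp ((-s) • A)).mulVec B
  map_add' p q := by
    rw [← integral_add (int_aux n T A B p F hF) (int_aux n T A B q F hF)]
    simp only [add_dotProduct, add_smul]
  map_smul' c p := by
    simp only [smul_dotProduct, smul_assoc, RingHom.id_apply]
    rw [integral_smul]

lemma gram_inj (n : ℕ) (T : ℝ) (A : Matrix (Fin n) (Fin n) ℝ) (B : Fin n → ℝ)
    (hctrb : (ctrbMatrix n A B).rank = n)
    (F : Set ℝ) (hF : F ⊆ Icc 0 T) (hm : MeasurableSet F) (hpos : volume F ≠ 0) :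
    Function.Injective (gram n T A B F hF) := by
  rw [← LinearMap.ker_eq_bot, LinearMap.ker_eq_bot']
  intro p hp
  let L : (Fin n → ℝ) →L[ℝ] ℝ := LinearMap.toContinuousLinearMap
    { toFun := fun x => p ⬝ᵥ x
      map_add' := fun x y => dotProduct_add _ _ _
      map_smul' := fun c x => by simp [dotProduct_smul] }
  have hL : ∀ x, L x = p ⬝ᵥ x := fun _ => rfl
  have h1 := L.integral_comp_comm (int_aux n T A B p F hF)
  change _ = L (gram n T A B F hF p) at h1
  rw [hp, map_zero] at h1
  have h2 := L.integrable_comp (int_aux n T A B p F hF)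
  have hsq : ∀ s : ℝ, L ((p ⬝ᵥ (NormedSpace.exp ((-s) • A)).mulVec B) •
      (NormedSpace.exp ((-s) • A)).mulVec B) =
      (p ⬝ᵥ (NormedSpace.exp ((-s) • A)).mulVec B) ^ 2 := by
    intro s
    rw [hL, dotProduct_smul, smul_eq_mul, sq]
  simp only [hsq] at h1 h2
  rw [integral_eq_zero_iff_of_nonneg (fun s => sq_nonneg _) h2] at h1
  rw [Filter.EventuallyEq, ae_restrict_iff' hm] at h1
  refine p_zero_of_pos n A B p hctrb
    (F ∩ {s | p ⬝ᵥ (NormedSpace.exp ((-s) • A)).mulVec B = 0}) ?_ (fun s hs => hs.2)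
  intro h0
  apply hpos
  rw [← h0]
  apply measure_congr
  filter_upwards [h1] with s hs
  apply propext
  refine ⟨fun h => ⟨h, ?_⟩, fun h => h.1⟩
  exact pow_eq_zero_iff (two_ne_zero) |>.1 (hs h)

lemma u_int (n : ℕ) (T : ℝ) (A : Matrix (Fin n) (Fin n) ℝ) (B : Fin n → ℝ) (u : ℝ → ℝ)
    (hu : Measurable u) (hb : MagBdd T u) :
    IntegrableOn (fun s : ℝ => u s • (NormedSpace.exp ((-s) • A)).mulVec B) (Icc 0 T) := by
  have hg : IntegrableOn (fun s : ℝ => (NormedSpace.exp ((-s) • A)).mulVec B) (Icc 0 T) :=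
    (g_cont n A B).integrableOn_Icc
  refine Integrable.bdd_smul hg 1 hu.aestronglyMeasurable ?_
  rw [ae_restrict_iff' measurableSet_Icc]
  exact Filter.Eventually.of_forall hb

lemma L0_le (T : ℝ) (hT : 0 < T) (u : ℝ → ℝ) : L0Norm T u ≤ T := by
  unfold L0Norm
  have : volume {t ∈ Icc (0:ℝ) T | u t ≠ 0} ≤ ENNReal.ofReal T := by
    refine (measure_mono (t := Icc 0 T) fun t ht => ht.1).trans ?_
    simp
  exact ENNReal.toReal_le_of_le_ofReal hT.le this

lemma stateInt_neg (n : ℕ) (T : ℝ) (A : Matrix (Fin n) (Fin n) ℝ) (B : Fin n → ℝ) (u : ℝ → ℝ) :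
    stateInt n T A B (fun s => - u s) = - stateInt n T A B u := by
  unfold stateInt
  rw [← integral_neg]
  simp only [neg_smul]

lemma reach_iff (n : ℕ) (T : ℝ) (A : Matrix (Fin n) (Fin n) ℝ) (B ξ : Fin n → ℝ) :
    ξ ∈ Reach n T A B ↔ ∃ u, Admissible n T A B ξ u := by
  constructor
  · rintro ⟨u, hu, hb, h⟩
    refine ⟨fun s => - u s, hu.neg, fun t ht => by simpa using hb t ht, ?_⟩
    rw [stateInt_neg, h]
  · rintro ⟨u, hu, hb, h⟩
    refine ⟨fun s => - u s, hu.neg, fun t ht => by simpa using hb t ht, ?_⟩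
    rw [stateInt_neg, h, neg_neg]

lemma Vbar_le (n : ℕ) (T : ℝ) (A : Matrix (Fin n) (Fin n) ℝ) (B ξ : Fin n → ℝ) (u : ℝ → ℝ)
    (h : Admissible n T A B ξ u) : Vbar n T A B ξ ≤ L0Norm T u := by
  unfold Vbar
  rw [if_pos ((reach_iff n T A B ξ).2 ⟨u, h⟩)]
  refine csInf_le ⟨0, ?_⟩ ⟨u, h, rfl⟩
  rintro c ⟨v, _, rfl⟩
  exact ENNReal.toReal_nonneg

lemma Vbar_le_T (n : ℕ) (T : ℝ) (hT : 0 < T) (A : Matrix (Fin n) (Fin n) ℝ) (B ξ : Fin n → ℝ) :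
    Vbar n T A B ξ ≤ T := by
  by_cases h : ξ ∈ Reach n T A B
  · obtain ⟨u, hu⟩ := (reach_iff n T A B ξ).1 h
    exact (Vbar_le n T A B ξ u hu).trans (L0_le T hT u)
  · unfold Vbar
    rw [if_neg h]

lemma exists_F (T : ℝ) (hT : 0 < T) (u : ℝ → ℝ) (hu : Measurable u) (α : ℝ)
    (hα : α ≤ T) (h : L0Norm T u < α) :
    ∃ F : Set ℝ, MeasurableSet F ∧ F ⊆ Icc 0 T ∧ (∀ s ∈ F, u s = 0) ∧ volume F ≠ 0 ∧
      L0Norm T u + (volume F).toReal < α := by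
  set E := {t ∈ Icc (0:ℝ) T | u t ≠ 0} with hE
  set Z := {t ∈ Icc (0:ℝ) T | u t = 0} with hZ
  have hZm : MeasurableSet Z := measurableSet_Icc.inter (hu (measurableSet_singleton 0))
  have hZ0 : volume Z ≠ 0 := by
    intro h0
    have h1 : volume (Icc 0 T) ≤ volume E + volume Z := by
      refine (measure_mono ?_).trans (measure_union_le E Z)
      intro t ht
      by_cases hut : u t = 0
      · exact Or.inr ⟨ht, hut⟩
      · exact Or.inl ⟨ht, hut⟩
    have hEfin : volume E ≠ ⊤ :=
      ((measure_mono (fun t ht => ht.1 : E ⊆ Icc 0 T)).trans_lt (by simp)).ne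
    rw [h0, add_zero, Real.volume_Icc, sub_zero, ENNReal.ofReal_le_iff_le_toReal hEfin] at h1
    change T ≤ L0Norm T u at h1
    linarith
  obtain ⟨x, hx, hacc⟩ := exists_acc Z hZ0
  set ε := (α - L0Norm T u) / 4 with hε
  have hεp : 0 < ε := by linarith
  refine ⟨Z ∩ Metric.ball x ε, hZm.inter measurableSet_ball, fun t ht => ht.1.1,
    fun t ht => ht.1.2, ?_, ?_⟩
  · exact (hacc _ (Filter.inter_mem self_mem_nhdsWithin
      (mem_nhdsWithin_of_mem_nhds (Metric.ball_mem_nhds x hεp)))).ne'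
  · have : (volume (Z ∩ Metric.ball x ε)).toReal ≤ 2 * ε := by
      apply ENNReal.toReal_le_of_le_ofReal (by positivity)
      rw [← Real.volume_ball x]
      exact measure_mono inter_subset_right
    linarith

theorem Vbar_upperSemicontinuous (n : ℕ) (T : ℝ) (hT : 0 < T)
    (A : Matrix (Fin n) (Fin n) ℝ) (B : Fin n → ℝ)
    (hctrb : (ctrbMatrix n A B).rank = n) (hA : A.det ≠ 0) :
    ∀ α : ℝ, IsOpen {ξ : Fin n → ℝ | Vbar n T A B ξ < α} := by
  intro α
  rw [isOpen_iff_mem_nhds]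
  intro ξ hξ
  rcases lt_or_ge T α with hα | hα
  · exact Filter.Eventually.of_forall fun η => (Vbar_le_T n T hT A B η).trans_lt hα
  have hR : ξ ∈ Reach n T A B := by
    by_contra hR
    have hξ' : Vbar n T A B ξ < α := hξ
    unfold Vbar at hξ'
    rw [if_neg hR] at hξ'
    linarith
  obtain ⟨u, ⟨hum, hub, hus⟩, huα⟩ : ∃ u, Admissible n T A B ξ u ∧ L0Norm T u < α := by
    have hξ' : Vbar n T A B ξ < α := hξ
    unfold Vbar at hξ'
    rw [if_pos hR] at hξ'
    obtain ⟨u₀, hu₀⟩ := (reach_iff n T A B ξ).1 hR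
    have hne : {c | ∃ u, Admissible n T A B ξ u ∧ c = L0Norm T u}.Nonempty :=
      ⟨_, u₀, hu₀, rfl⟩
    obtain ⟨c, ⟨u, hu, rfl⟩, hc⟩ := exists_lt_of_csInf_lt hne hξ'
    exact ⟨u, hu, hc⟩
  obtain ⟨F, hFm, hFT, hFu, hF0, hFα⟩ := exists_F T hT u hum α hα huα
  have hinj := gram_inj n T A B hctrb F hFT hFm hF0
  let W := LinearEquiv.ofInjectiveEndo (gram n T A B F hFT) hinj
  have hWcont : Continuous W.symm := LinearMap.continuous_of_finiteDimensional W.symm.toLinearMap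
  have hWt : Filter.Tendsto (fun η => W.symm (η - ξ)) (nhds ξ) (nhds 0) := by
    have : Continuous fun η => W.symm (η - ξ) := hWcont.comp (by fun_prop)
    have h := this.tendsto ξ
    simpa using h
  have hsmall : ∀ᶠ p in nhds (0 : Fin n → ℝ), ∀ s ∈ Icc (0:ℝ) T,
      |p ⬝ᵥ (NormedSpace.exp ((-s) • A)).mulVec B| < 1 := by
    apply isCompact_Icc.eventually_forall_of_forall_eventually
    intro s _
    have hc : Continuous fun q : (Fin n → ℝ) × ℝ =>
      |q.1 ⬝ᵥ (NormedSpace.exp ((-q.2) • A)).mulVec B| := (gdot_cont n A B).abs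
    apply hc.continuousAt.eventually_lt continuousAt_const
    simp
  filter_upwards [hWt.eventually hsmall] with η hη
  set p := W.symm (η - ξ) with hp
  have hWp : gram n T A B F hFT p = η - ξ := by
    change W p = _
    rw [hp, LinearEquiv.apply_symm_apply]
  set v : ℝ → ℝ := F.indicator fun s => p ⬝ᵥ (NormedSpace.exp ((-s) • A)).mulVec B with hv
  have hvm : Measurable v :=
    ((continuous_const.dotProduct (g_cont n A B)).measurable).indicator hFm
  have hvb : MagBdd T v := by
    intro t ht
    by_cases htF : t ∈ F
    · rw [hv, indicator_of_mem htF]; exact (hη t ht).le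
    · rw [hv, indicator_of_notMem htF]; simp
  have hvs : stateInt n T A B v = η - ξ := by
    rw [← hWp]
    unfold stateInt gram
    have : (fun s => v s • (NormedSpace.exp ((-s) • A)).mulVec B) =
        F.indicator (fun s => (p ⬝ᵥ (NormedSpace.exp ((-s) • A)).mulVec B) •
          (NormedSpace.exp ((-s) • A)).mulVec B) := by
      funext s
      by_cases hs : s ∈ F <;> simp [hv, hs]
    rw [this, setIntegral_indicator hFm, inter_eq_self_of_subset_right hFT]
    rfl
  have hadm : Admissible n T A B η (fun s => u s - v s) := by
    refine ⟨hum.sub hvm, ?_, ?_⟩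
    · intro t ht
      by_cases htF : t ∈ F
      · have := hvb t ht
        simpa [hFu t htF] using this
      · have : v t = 0 := by rw [hv, indicator_of_notMem htF]
        simpa [this] using hub t ht
    · have : stateInt n T A B (fun s => u s - v s) =
          stateInt n T A B u - stateInt n T A B v := by
        unfold stateInt
        rw [← integral_sub (u_int n T A B u hum hub) (u_int n T A B v hvm hvb)]
        simp only [sub_smul]
      rw [this, hus, hvs]
      abel
  refine (Vbar_le n T A B η _ hadm).trans_lt (lt_of_le_of_lt ?_ hFα)
  unfold L0Norm
  have hfin : ∀ S ⊆ Icc (0:ℝ) T, volume S ≠ ⊤ := fun S hS =>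
    ((measure_mono hS).trans_lt (by simp)).ne
  rw [← ENNReal.toReal_add (hfin _ fun t ht => ht.1) (hfin _ hFT)]
  apply ENNReal.toReal_mono
  · exact ENNReal.add_ne_top.2 ⟨hfin _ fun t ht => ht.1, hfin _ hFT⟩
  refine (measure_mono ?_).trans (measure_union_le _ _)
  rintro t ⟨ht, hne⟩
  by_cases htF : t ∈ F
  · exact Or.inr htF
  · left
    have : v t = 0 := by rw [hv, indicator_of_notMem htF]
    refine ⟨ht, ?_⟩
    simpa [this] using hne
end
end
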